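/- Fix β > 0 and a positive integer ℓ with ℓ ≥ ⌊β⌋+1, where ⌊β⌋ is the largest integer strictly smaller than β. There is a constant C₂ = C₂(ℓ) depending on ℓ only (the constant from the ℓ¹-bound on the local polynomial weights) such that the following holds. Let G be a distribution function on [0,∞) belonging to H_β(L, I) with I = [x₀−d, x₀+d], let λ > 0, μ⁻¹ := ∫₀^∞(1−G(x))dx ∈ (0,∞), ρ := λ/μ, and define R(t) := ρ² + λ∫_t^∞ (1−G(x)) dx for t ≥ 0. Suppose h ≥ (ℓ+2)δ/2 and D_{x₀} ⊆ I, and let {a_k(x₀) : k ∈ M_{D_{x₀}}} be the minimizer of problem (P_{x₀}). Then |Σ_{k∈M_{D_{x₀}}} a_k(x₀) R(kδ) − R′(x₀)| ≤ C₂ λ L h^{β}. -/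

import Mathlib

open MeasureTheory
open scoped Classical
/-- `⌊β⌋`: the largest integer strictly smaller than `β` (for `β > 0`). -/
noncomputable def flr (β : ℝ) : ℕ := ⌈β⌉₊ - 1

/-- The Hölder class `H_β(L, I)`: `⌊β⌋` times continuously differentiable on `I`, with the
`⌊β⌋`-th derivative Hölder continuous of exponent `β − ⌊β⌋` and constant `L`. -/
def HolderClass (β L : ℝ) (I : Set ℝ) (G : ℝ → ℝ) : Prop :=
  ContDiffOn ℝ (flr β) G I ∧
    ∀ x ∈ I, ∀ y ∈ I,
      |iteratedDerivWithin (flr β) G I x - iteratedDerivWithin (flr β) G I y| ≤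
        L * |x - y| ^ (β - (flr β : ℝ))

/-- The segment `D_x` from the paper. -/
noncomputable def Dseg (T δ h x : ℝ) : Set ℝ :=
  if x ≤ h then Set.Icc 0 (2 * h)
  else if x ≤ T - δ - h then Set.Icc (x - h) (x + h)
  else Set.Icc (T - δ - 2 * h) (T - δ)

/-- `M_{D_x} = {k ∈ {1,…,n} : kδ ∈ D_x}`. -/
noncomputable def Mset (n : ℕ) (T δ h x : ℝ) : Finset ℕ :=
  (Finset.Icc 1 n).filter fun k => (k : ℝ) * δ ∈ Dseg T δ h x

/-- The constraints of the optimization problem `(P_x)`. -/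
def Feasible (ℓ n : ℕ) (T δ h x : ℝ) (a : ℕ → ℝ) : Prop :=
  (∑ k ∈ Mset n T δ h x, a k) = 0 ∧
    ∀ j ∈ Finset.Icc 1 ℓ,
      (∑ k ∈ Mset n T δ h x, a k * ((k : ℝ) * δ) ^ j) = (j : ℝ) * x ^ (j - 1)

/-- The covariance function `R(t) = ρ² + λ ∫_t^∞ (1−G(x)) dx` of the queue-length process
(shifted by the squared mean), with `ρ = λ/μ`. -/
noncomputable def Rcov (G : ℝ → ℝ) (lam μ : ℝ) (t : ℝ) : ℝ :=
  (lam / μ) ^ 2 + lam * ∫ x in Set.Ioi t, (1 - G x)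

open Polynomial in
lemma exists_antideriv (Q : Polynomial ℝ) (x₀ c : ℝ) (f : ℕ) (hQ : Q.natDegree ≤ f) :
    ∃ P : Polynomial ℝ, P.natDegree ≤ f + 1 ∧ derivative P = Q ∧ P.eval x₀ = c := by
  let P₀ : Polynomial ℝ := ∑ i ∈ Finset.range (f+1), C (Q.coeff i / ((i:ℝ)+1)) * X ^ (i+1)
  refine ⟨P₀ + C (c - P₀.eval x₀), ?_, ?_, ?_⟩
  · refine natDegree_add_le_of_degree_le ?_ (by simp)
    refine natDegree_sum_le_of_forall_le _ _ ?_
    intro i hi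
    refine (natDegree_C_mul_X_pow_le _ _).trans ?_
    simp at hi; omega
  · rw [derivative_add, derivative_C, add_zero, derivative_sum]
    conv_rhs => rw [Q.as_sum_range' (f+1) (by omega)]
    refine Finset.sum_congr rfl fun i _ => ?_
    have : ((i:ℝ)+1) ≠ 0 := by positivity
    rw [derivative_C_mul, derivative_X_pow, ← mul_assoc, ← C_mul_X_pow_eq_monomial]
    simp only [Nat.add_sub_cancel, Nat.cast_add, Nat.cast_one]
    rw [← C_mul, div_mul_cancel₀ _ this]
  · simp

lemma step_deriv (I : Set ℝ) (hI : Convex ℝ I) (F F' : ℝ → ℝ) (x₀ K γ : ℝ) (hx : x₀ ∈ I) (hγ : 0 ≤ γ)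
    (hK : 0 ≤ K) (hF : ∀ y ∈ I, HasDerivWithinAt F (F' y) I y) (Q : Polynomial ℝ) (f : ℕ)
    (hQ : Q.natDegree ≤ f) (hb : ∀ y ∈ I, |F' y - Q.eval y| ≤ K * |y - x₀| ^ γ) :
    ∃ P : Polynomial ℝ, P.natDegree ≤ f + 1 ∧ P.derivative = Q ∧ P.eval x₀ = F x₀ ∧
      ∀ y ∈ I, |F y - P.eval y| ≤ K * |y - x₀| ^ (γ + 1) := by
  obtain ⟨P, h1, h2, h3⟩ := exists_antideriv Q x₀ (F x₀) f hQ
  refine ⟨P, h1, h2, h3, fun y hy => ?_⟩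
  have hsub : Set.uIcc x₀ y ⊆ I := by
    rw [← segment_eq_uIcc]; exact hI.segment_subset hx hy
  have := Convex.norm_image_sub_le_of_norm_hasDerivWithin_le (𝕜 := ℝ)
    (f := fun z => F z - P.eval z) (f' := fun z => F' z - Q.eval z) (s := Set.uIcc x₀ y)
    (C := K * |y - x₀| ^ γ) (x := x₀) (y := y)
    (fun z hz => by
      have := ((hF z (hsub hz)).mono hsub).sub (P.hasDerivAt z).hasDerivWithinAt
      rw [h2] at this
      exact this)
    (fun z hz => by
      refine (hb z (hsub hz)).trans ?_
      have h : |z - x₀| ≤ |y - x₀| := Set.abs_sub_left_of_mem_uIcc hz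
      gcongr) (convex_uIcc _ _) Set.left_mem_uIcc Set.right_mem_uIcc
  simp only [h3, sub_self, sub_zero, Real.norm_eq_abs] at this
  refine this.trans (le_of_eq ?_)
  rw [Real.rpow_add_one' (abs_nonneg _) (by positivity)]; ring

lemma taylor_holder (I : Set ℝ) (hI : Convex ℝ I) (hU : UniqueDiffOn ℝ I) (x₀ L α : ℝ) (hx : x₀ ∈ I)
    (hL : 0 ≤ L) (hα : 0 ≤ α) (f : ℕ) : ∀ (G : ℝ → ℝ), ContDiffOn ℝ f G I →
    (∀ x ∈ I, ∀ y ∈ I, |iteratedDerivWithin f G I x - iteratedDerivWithin f G I y| ≤ L * |x - y| ^ α) →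
    ∃ Q : Polynomial ℝ, Q.natDegree ≤ f ∧ Q.eval x₀ = G x₀ ∧
      ∀ y ∈ I, |G y - Q.eval y| ≤ L * |y - x₀| ^ (f + α) := by
  induction f with
  | zero =>
    intro G _ hG
    refine ⟨Polynomial.C (G x₀), by simp, by simp, fun y hy => ?_⟩
    simpa using hG y hy x₀ hx
  | succ f ih =>
    intro G hc hG
    push_cast at hc
    rw [contDiffOn_succ_iff_derivWithin hU] at hc
    obtain ⟨Q, h1, h2, h3⟩ := ih (derivWithin G I) hc.2.2 (by
      simpa only [iteratedDerivWithin_succ'] using hG)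
    obtain ⟨P, k1, k2, k3, k4⟩ := step_deriv I hI G (derivWithin G I) x₀ L (f + α) hx (by positivity) hL
      (fun y hy => (hc.1 y hy).hasDerivWithinAt) Q f h1 h3
    refine ⟨P, k1, k3, fun y hy => ?_⟩
    convert k4 y hy using 3
    push_cast; ring

lemma lag_wts (N : ℕ) (P : Polynomial ℝ) (hP : P.natDegree < N) (η y₀ x : ℝ) (hη : η ≠ 0) :
    ∑ r ∈ Finset.range N, (1/η * (Lagrange.basis (Finset.range N) (fun i : ℕ => (i:ℝ)) r).derivative.eval
      ((x - y₀)/η)) * P.eval (y₀ + r * η) = P.derivative.eval x := by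
  let q := P.comp (Polynomial.C y₀ + Polynomial.C η * Polynomial.X)
  have hq : q.degree < (Finset.range N).card := by
    rw [Finset.card_range]
    have h1 : q.natDegree < N := by
      refine lt_of_le_of_lt (Polynomial.natDegree_comp_le.trans ?_) hP
      have : (Polynomial.C y₀ + Polynomial.C η * Polynomial.X).natDegree ≤ 1 :=
        Polynomial.natDegree_add_le_of_degree_le (by simp) ((Polynomial.natDegree_C_mul_le _ _).trans Polynomial.natDegree_X_le)
      exact (Nat.mul_le_mul_left _ this).trans (by simp)
    exact Polynomial.degree_le_natDegree.trans_lt (by exact_mod_cast h1)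
  have h := Lagrange.eq_interpolate (s := Finset.range N) (v := fun i : ℕ => (i:ℝ))
    (fun a _ b _ h => by simpa using h) hq
  have h2 := congrArg (fun p => p.derivative.eval ((x - y₀)/η)) h
  simp only [Lagrange.interpolate_apply, Polynomial.derivative_sum, Polynomial.eval_finsetSum,
    Polynomial.derivative_C_mul, Polynomial.eval_mul, Polynomial.eval_C] at h2
  have h3 : q.derivative.eval ((x - y₀)/η) = η * P.derivative.eval x := by
    simp only [q, Polynomial.derivative_comp]
    simp [Polynomial.eval_comp, mul_div_cancel₀ _ hη]
  rw [h3] at h2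
  have h4 : P.derivative.eval x = 1/η * (η * P.derivative.eval x) := by field_simp
  rw [h4, h2, Finset.mul_sum]
  refine Finset.sum_congr rfl fun r _ => ?_
  have : q.eval (r:ℝ) = P.eval (y₀ + r * η) := by
    simp only [q, Polynomial.eval_comp, Polynomial.eval_add, Polynomial.eval_mul, Polynomial.eval_C, Polynomial.eval_X]
    rw [mul_comm]
  rw [this]; ring

lemma lag_bound (ℓ : ℕ) : ∃ B : ℝ, 0 < B ∧ ∀ N ≤ ℓ + 1, ∀ r < N, ∀ t : ℝ, |t| ≤ 2 * ((ℓ:ℝ)+1) →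
    |(Lagrange.basis (Finset.range N) (fun i : ℕ => (i:ℝ)) r).derivative.eval t| ≤ B := by
  have h : ∀ N r : ℕ, ∃ B : ℝ, 0 ≤ B ∧ ∀ t : ℝ, |t| ≤ 2 * ((ℓ:ℝ)+1) →
    |(Lagrange.basis (Finset.range N) (fun i : ℕ => (i:ℝ)) r).derivative.eval t| ≤ B := by
    intro N r
    obtain ⟨B, hB⟩ := (isCompact_Icc (a := -(2 * ((ℓ:ℝ)+1))) (b := 2 * ((ℓ:ℝ)+1))).exists_bound_of_continuousOn
      (f := fun t => (Lagrange.basis (Finset.range N) (fun i : ℕ => (i:ℝ)) r).derivative.eval t)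
      (Polynomial.continuous _).continuousOn
    exact ⟨max B 0, le_max_right _ _, fun t ht => (hB t (abs_le.mp ht)).trans (le_max_left _ _)⟩
  choose B hB0 hB using h
  refine ⟨1 + ∑ N ∈ Finset.range (ℓ+2), ∑ r ∈ Finset.range N, B N r, ?_, ?_⟩
  · have : 0 ≤ ∑ N ∈ Finset.range (ℓ+2), ∑ r ∈ Finset.range N, B N r :=
      Finset.sum_nonneg fun N _ => Finset.sum_nonneg fun r _ => hB0 N r
    linarith
  · intro N hN r hr t ht
    refine (hB N r t ht).trans ?_
    have h1 := Finset.single_le_sum (f := fun r => B N r) (s := Finset.range N)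
      (fun r _ => hB0 N r) (Finset.mem_range.2 hr)
    have h2 := Finset.single_le_sum (f := fun N => ∑ r ∈ Finset.range N, B N r) (s := Finset.range (ℓ+2))
      (fun N _ => Finset.sum_nonneg fun r _ => hB0 N r) (Finset.mem_range.2 (by omega : N < ℓ+2))
    linarith

lemma sum_grid (s N : ℕ) (F : ℕ → ℝ) :
    ∑ u ∈ Finset.range (s * N), F u = ∑ i ∈ Finset.range s, ∑ r ∈ Finset.range N, F (i + s * r) := by
  rw [Finset.sum_comm]
  induction N with
  | zero => simp
  | succ N ih =>
    rw [Nat.mul_succ, Finset.sum_range_add, ih, Finset.sum_range_succ]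
    congr 1
    exact Finset.sum_congr rfl fun i _ => by rw [add_comm]

lemma cs_abs (M : Finset ℕ) (a : ℕ → ℝ) (X : ℝ) (hX : 0 ≤ X)
    (h : ∑ k ∈ M, a k ^ 2 ≤ M.card * X^2) : ∑ k ∈ M, |a k| ≤ M.card * X := by
  have := sq_sum_le_card_mul_sum_sq (s := M) (f := fun k => |a k|)
  simp only [sq_abs] at this
  refine abs_le_of_sq_le_sq' ?_ (by positivity) |>.2
  calc _ ≤ _ := this
    _ ≤ (M.card:ℝ) * (M.card * X^2) := by gcongr
    _ = _ := by ring

lemma flr_spec (β : ℝ) (hβ : 0 < β) : (flr β : ℝ) ≤ β ∧ β ≤ flr β + 1 := by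
  unfold flr
  have h1 : 1 ≤ ⌈β⌉₊ := Nat.one_le_ceil_iff.2 hβ
  push_cast [Nat.cast_sub h1]
  have h2 := Nat.ceil_lt_add_one hβ.le
  have h3 := Nat.le_ceil β
  constructor <;> linarith

lemma bias_poly (β L lam μ x₀ d : ℝ) (G : ℝ → ℝ) (hβ : 0 < β) (hL : 0 < L) (hlam : 0 < lam)
    (hd : 0 < d) (hmono : Monotone G)
    (hInt : IntegrableOn (fun x => 1 - G x) (Set.Ioi 0))
    (hH : HolderClass β L (Set.Icc (x₀ - d) (x₀ + d)) G) :
    ∃ P : Polynomial ℝ, P.natDegree ≤ flr β + 1 ∧ P.derivative.eval x₀ = deriv (Rcov G lam μ) x₀ ∧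
      ∀ y ∈ Set.Icc (x₀ - d) (x₀ + d),
        |Rcov G lam μ y - P.eval y| ≤ lam * L * |y - x₀| ^ (β + 1) := by
  obtain ⟨hf1, hf2⟩ := flr_spec β hβ
  have hx : x₀ ∈ Set.Icc (x₀ - d) (x₀ + d) := ⟨by linarith, by linarith⟩
  have hle : x₀ - d ≤ x₀ + d := by linarith
  have hlt : x₀ - d < x₀ + d := by linarith
  obtain ⟨Q, q1, q2, q3⟩ := taylor_holder (Set.Icc (x₀ - d) (x₀ + d)) (convex_Icc _ _)
    (uniqueDiffOn_Icc hlt) x₀ L (β - flr β) hx hL.le (by linarith) (flr β) G hH.1 hH.2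
  have hII : ∀ a b : ℝ, IntervalIntegrable (fun x => 1 - G x) volume a b := fun a b =>
    intervalIntegrable_const.sub (hmono.intervalIntegrable)
  have hIoi : ∀ t : ℝ, IntegrableOn (fun x => 1 - G x) (Set.Ioi t) := by
    intro t
    have h1 : IntegrableOn (fun x => 1 - G x) (Set.Ioc t (max t 0)) := by
      have := hII t (max t 0)
      rwa [intervalIntegrable_iff_integrableOn_Ioc_of_le (le_max_left _ _)] at this
    have h2 := h1.union (hInt.mono_set (Set.Ioi_subset_Ioi (le_max_right t 0)))
    rwa [Set.Ioc_union_Ioi_eq_Ioi (le_max_left _ _)] at h2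
  have hR : ∀ t, Rcov G lam μ t = Rcov G lam μ x₀ - lam * ∫ x in x₀..t, (1 - G x) := by
    intro t
    unfold Rcov
    rw [← intervalIntegral.integral_Ioi_sub_Ioi' (hIoi x₀) (hIoi t)]
    ring
  have hcont : ContinuousOn G (Set.Icc (x₀ - d) (x₀ + d)) := hH.1.continuousOn
  let Gt : ℝ → ℝ := Set.IccExtend hle ((Set.Icc (x₀ - d) (x₀ + d)).domRestrict G)
  have hGt : Continuous Gt := (continuousOn_iff_continuous_domRestrict.1 hcont).Icc_extend'
  have hGe : ∀ y ∈ Set.Icc (x₀ - d) (x₀ + d), Gt y = G y := fun y hy => by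
    simp only [Gt]
    rw [Set.IccExtend_of_mem hle _ hy]; rfl
  have hder : ∀ y ∈ Set.Icc (x₀ - d) (x₀ + d),
      HasDerivWithinAt (Rcov G lam μ) (-lam * (1 - G y)) (Set.Icc (x₀ - d) (x₀ + d)) y := by
    intro y hy
    have hc : Continuous (fun x => 1 - Gt x) := by fun_prop
    have h1 : HasDerivAt (fun t => Rcov G lam μ x₀ - lam * ∫ x in x₀..t, (1 - Gt x))
        (-lam * (1 - G y)) y := by
      have := ((hc.integral_hasStrictDerivAt x₀ y).hasDerivAt.const_mul lam).const_sub
        (Rcov G lam μ x₀)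
      rw [hGe y hy] at this
      rw [neg_mul]
      exact this
    refine h1.hasDerivWithinAt.congr_of_mem (fun t ht => ?_) hy
    rw [hR t]
    congr 2
    refine intervalIntegral.integral_congr fun x hx' => ?_
    have : x ∈ Set.Icc (x₀ - d) (x₀ + d) := by
      have := (convex_Icc (𝕜 := ℝ) (x₀ - d) (x₀ + d)).segment_subset hx ht
      rw [segment_eq_uIcc] at this
      exact this hx'
    simp only [hGe x this]
  obtain ⟨P, p1, p2, p3, p4⟩ := step_deriv (Set.Icc (x₀ - d) (x₀ + d)) (convex_Icc _ _)
    (Rcov G lam μ) (fun y => -lam * (1 - G y)) x₀ (lam * L) β hx hβ.le (by positivity) hder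
    (Polynomial.C (-lam) * (Polynomial.C 1 - Q)) (flr β)
    ((Polynomial.natDegree_C_mul_le _ _).trans
      ((Polynomial.natDegree_sub_le _ _).trans (by simpa using q1)))
    (fun y hy => by
      have h := q3 y hy
      have e : (flr β : ℝ) + (β - flr β) = β := by ring
      rw [e] at h
      have : -lam * (1 - G y) - Polynomial.eval y (Polynomial.C (-lam) * (Polynomial.C 1 - Q))
          = lam * (G y - Q.eval y) := by
        simp; ring
      rw [this, abs_mul, abs_of_pos hlam, mul_assoc]
      gcongr)
  refine ⟨P, p1, ?_, p4⟩
  rw [p2, ((hder x₀ hx).hasDerivAt (Icc_mem_nhds (by linarith) (by linarith))).deriv]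
  simp [q2]

lemma Dseg_eq (T δ h x : ℝ) (hh : 0 < h) (h0 : 0 ≤ x) (hT : x ≤ T - δ) :
    ∃ A B : ℝ, Dseg T δ h x = Set.Icc A B ∧ A ≤ x ∧ x ≤ B ∧ B - A = 2 * h := by
  unfold Dseg
  split_ifs with h1 h2
  · exact ⟨0, 2 * h, rfl, h0, by linarith, by ring⟩
  · exact ⟨x - h, x + h, rfl, by linarith, by linarith, by ring⟩
  · exact ⟨T - δ - 2 * h, T - δ, rfl, by linarith, by linarith, by ring⟩

lemma Mset_eq (n : ℕ) (T δ h x : ℝ) (hδ : 0 < δ) (hT : T = n * δ) (hh : 0 < h) (h0 : 0 ≤ x)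
    (hxT : x ≤ T - δ) (hne : (Mset n T δ h x).Nonempty) :
    ∃ p m : ℕ, 1 ≤ m ∧ Mset n T δ h x = Finset.Ico p (p + m) ∧ ((p:ℝ) - 1) * δ ≤ x ∧
      x ≤ ((p:ℝ) + m) * δ ∧ ((m:ℝ) - 1) * δ ≤ 2 * h := by
  obtain ⟨A, B, hD, hA, hB, hAB⟩ := Dseg_eq T δ h x hh h0 hxT
  have hmem : ∀ k : ℕ, k ∈ Mset n T δ h x ↔ (1 ≤ k ∧ k ≤ n) ∧ A ≤ k * δ ∧ k * δ ≤ B := by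
    intro k; simp [Mset, hD]
  set M := Mset n T δ h x
  obtain ⟨p, hp, hpl⟩ : ∃ p ∈ M, ∀ k ∈ M, p ≤ k :=
    ⟨M.min' hne, M.min'_mem hne, fun k hk => M.min'_le k hk⟩
  obtain ⟨q, hq, hql⟩ : ∃ q ∈ M, ∀ k ∈ M, k ≤ q :=
    ⟨M.max' hne, M.max'_mem hne, fun k hk => M.le_max' k hk⟩
  have hpq := hpl q hq
  have hp' := (hmem p).1 hp
  have hq' := (hmem q).1 hq
  obtain ⟨r, rfl⟩ := Nat.exists_eq_add_of_le hpq
  refine ⟨p, r + 1, by omega, ?_, ?_, ?_, ?_⟩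
  · ext k
    rw [Finset.mem_Ico]
    constructor
    · intro hk
      have := hpl k hk; have := hql k hk; omega
    · rintro ⟨h1, h2⟩
      rw [hmem]
      have h3 : k ≤ p + r := by omega
      have h1' : (p:ℝ) ≤ k := by exact_mod_cast h1
      have h3' : (k:ℝ) ≤ (p + r : ℕ) := by exact_mod_cast h3
      refine ⟨⟨by omega, by omega⟩, ?_, ?_⟩
      · exact hp'.2.1.trans (by gcongr)
      · exact le_trans (by gcongr) hq'.2.2
  · by_contra hcon
    push Not at hcon
    by_cases h1 : p = 1
    · subst h1; simp at hcon; linarith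
    · have h2 : p - 1 ∈ M := by
        rw [hmem]
        have : ((p - 1 : ℕ) : ℝ) = (p:ℝ) - 1 := by
          rw [Nat.cast_sub (by omega)]; simp
        rw [this]
        refine ⟨⟨by omega, by omega⟩, by linarith, ?_⟩
        have := hp'.2.2
        nlinarith
      have := hpl _ h2
      omega
  · by_contra hcon
    push Not at hcon
    push_cast at hcon
    by_cases h1 : p + r = n
    · have : (p:ℝ) + r = n := by exact_mod_cast h1
      have : ((p:ℝ) + (r + 1)) * δ = T + δ := by rw [hT, ← this]; ring
      linarith
    · have h2 : p + r + 1 ∈ M := by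
        rw [hmem]
        have h3 := hq'.2.1
        push_cast at h3
        refine ⟨⟨by omega, by omega⟩, ?_, ?_⟩
        · push_cast; nlinarith
        · push_cast; nlinarith
      have := hql _ h2
      omega
  · have h3 := hq'.2.2
    have h4 := hp'.2.1
    push_cast at h3 ⊢
    nlinarith

lemma feas_poly (ℓ n : ℕ) (T δ h x : ℝ) (a : ℕ → ℝ) (hF : Feasible ℓ n T δ h x a)
    (P : Polynomial ℝ) (hP : P.natDegree ≤ ℓ) :
    ∑ k ∈ Mset n T δ h x, a k * P.eval ((k:ℝ) * δ) = P.derivative.eval x := by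
  have key : ∀ j ∈ Finset.range (ℓ+1), ∑ k ∈ Mset n T δ h x, a k * ((k : ℝ) * δ) ^ j
      = (j : ℝ) * x ^ (j - 1) := by
    intro j hj
    rw [Finset.mem_range] at hj
    rcases Nat.eq_zero_or_pos j with rfl | hj0
    · simpa using hF.1
    · exact hF.2 j (Finset.mem_Icc.2 ⟨hj0, by omega⟩)
  have h1 : P.derivative.eval x = ∑ j ∈ Finset.range (ℓ+1), P.coeff j * ((j:ℝ) * x ^ (j-1)) := by
    conv_lhs => rw [P.as_sum_range_C_mul_X_pow' (show P.natDegree < ℓ + 1 by omega)]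
    rw [Polynomial.derivative_sum, Polynomial.eval_finsetSum]
    refine Finset.sum_congr rfl fun j _ => ?_
    rw [Polynomial.derivative_C_mul, Polynomial.derivative_X_pow]
    simp
  have h2 : ∑ j ∈ Finset.range (ℓ+1), P.coeff j * ((j:ℝ) * x ^ (j-1)) =
      ∑ j ∈ Finset.range (ℓ+1), P.coeff j * ∑ k ∈ Mset n T δ h x, a k * ((k : ℝ) * δ) ^ j :=
    Finset.sum_congr rfl fun j hj => by rw [key j hj]
  rw [h1, h2]
  simp only [Polynomial.eval_eq_sum_range' (show P.natDegree < ℓ + 1 by omega), Finset.mul_sum]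
  rw [Finset.sum_comm]
  exact Finset.sum_congr rfl fun j _ => Finset.sum_congr rfl fun k _ => by ring

lemma l1_bound (ℓ : ℕ) : ∃ C : ℝ, 0 < C ∧ ∀ (n p m : ℕ) (T δ h x : ℝ) (a : ℕ → ℝ), 0 < δ → 1 ≤ m →
    Mset n T δ h x = Finset.Ico p (p + m) → ((p:ℝ) - 1) * δ ≤ x → x ≤ ((p:ℝ) + m) * δ →
    Feasible ℓ n T δ h x a →
    (∀ b : ℕ → ℝ, Feasible ℓ n T δ h x b →
          (∑ k ∈ Mset n T δ h x, a k ^ 2) ≤ ∑ k ∈ Mset n T δ h x, b k ^ 2) →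
    ∑ k ∈ Mset n T δ h x, |a k| ≤ C / (m * δ) := by
  obtain ⟨B, hB, hBd⟩ := lag_bound ℓ
  refine ⟨4 * ((ℓ:ℝ)+1)^2 * B, by positivity, ?_⟩
  intro n p m T δ h x a hδ hm hM hx1 hx2 hF hmin
  have hm' : (1:ℝ) ≤ m := by exact_mod_cast hm
  have hcard : (Mset n T δ h x).card = m := by rw [hM]; simp
  suffices hsuf : ∃ X : ℝ, 0 ≤ X ∧ X * (m^2 * δ) ≤ 4 * ((ℓ:ℝ)+1)^2 * B ∧
      ∑ k ∈ Mset n T δ h x, |a k| ≤ m * X by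
    obtain ⟨X, hX0, hX1, hX2⟩ := hsuf
    refine hX2.trans ?_
    rw [le_div_iff₀ (by positivity)]
    nlinarith
  rcases Nat.lt_or_ge ℓ m with hlm | hlm
  · obtain ⟨s, hs⟩ : ∃ s, s = m / (ℓ + 1) := ⟨_, rfl⟩
    have hs1 : 1 ≤ s := by rw [hs]; exact Nat.div_pos hlm (by omega)
    have hs2 : s * (ℓ + 1) ≤ m := by rw [hs]; exact Nat.div_mul_le_self _ _
    have hs3 : m < (s + 1) * (ℓ + 1) := by rw [hs]; exact Nat.lt_mul_of_div_lt (Nat.lt_succ_self _) (by omega)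
    have hs1' : (1:ℝ) ≤ s := by exact_mod_cast hs1
    have hs4 : (m:ℝ) ≤ 2 * ((ℓ:ℝ)+1) * s := by
      have : (m:ℝ) ≤ (s+1) * (ℓ+1) := by exact_mod_cast hs3.le
      nlinarith
    let w : ℕ → ℕ → ℝ := fun i r => 1/(s * δ) *
      (Lagrange.basis (Finset.range (ℓ+1)) (fun i : ℕ => (i:ℝ)) r).derivative.eval
        ((x - (p + i) * δ)/(s * δ))
    let b : ℕ → ℝ := fun k => if k < p + s * (ℓ+1) then 1/s * w ((k - p) % s) ((k - p) / s) else 0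
    have hsum : ∀ f : ℕ → ℝ, ∑ k ∈ Mset n T δ h x, b k * f k =
        ∑ i ∈ Finset.range s, 1/s * ∑ r ∈ Finset.range (ℓ+1), w i r * f (p + (i + s * r)) := by
      intro f
      rw [hM, Finset.sum_Ico_eq_sum_range, Nat.add_sub_cancel_left]
      rw [← Finset.sum_subset (Finset.range_subset_range.2 hs2), sum_grid]
      · refine Finset.sum_congr rfl fun i hi => ?_
        rw [Finset.mul_sum]
        refine Finset.sum_congr rfl fun r hr => ?_
        rw [Finset.mem_range] at hi hr
        have h1 : p + (i + s * r) < p + s * (ℓ+1) := by nlinarith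
        have h2 : (i + s * r) % s = i := by
          rw [Nat.add_mul_mod_self_left, Nat.mod_eq_of_lt hi]
        have h3 : (i + s * r) / s = r := by
          rw [Nat.add_mul_div_left _ _ (by omega), Nat.div_eq_of_lt hi, zero_add]
        simp only [b, if_pos h1, Nat.add_sub_cancel_left, h2, h3]
        ring
      · intro u _ hu
        rw [Finset.mem_range] at hu
        have : ¬ (p + u < p + s * (ℓ+1)) := by omega
        simp only [b, if_neg this, zero_mul]
    have hpoly : ∀ P : Polynomial ℝ, P.natDegree ≤ ℓ →
        ∑ k ∈ Mset n T δ h x, b k * P.eval ((k:ℝ) * δ) = P.derivative.eval x := by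
      intro P hP
      rw [hsum fun k => P.eval ((k:ℝ) * δ)]
      have : ∀ i ∈ Finset.range s, 1/(s:ℝ) * ∑ r ∈ Finset.range (ℓ+1), w i r *
          P.eval (((p + (i + s * r) : ℕ):ℝ) * δ) = 1/(s:ℝ) * P.derivative.eval x := by
        intro i _
        rw [← lag_wts (ℓ+1) P (by omega) (s * δ) ((p + i) * δ) x (by positivity)]
        congr 1
        refine Finset.sum_congr rfl fun r _ => ?_
        congr 2
        push_cast; ring
      rw [Finset.sum_congr rfl this]
      simp
      field_simp
    have hbF : Feasible ℓ n T δ h x b := by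
      constructor
      · simpa using hpoly 1 (by simp)
      · intro j hj
        rw [Finset.mem_Icc] at hj
        simpa [Polynomial.derivative_X_pow] using hpoly (Polynomial.X ^ j) (by simpa using hj.2)
    have hbB : ∀ k, |b k| ≤ B / (s^2 * δ) := by
      intro k
      simp only [b]
      split_ifs with hk
      · have hi : (k - p) % s < s := Nat.mod_lt _ (by omega)
        have hr : (k - p) / s < ℓ + 1 := by
          rw [Nat.div_lt_iff_lt_mul (by omega)]
          have : 0 < s * (ℓ+1) := by positivity
          rw [mul_comm]; omega
        have hi' : (((k - p) % s : ℕ):ℝ) + 1 ≤ s := by exact_mod_cast hi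
        have hi0 : (0:ℝ) ≤ (((k - p) % s : ℕ):ℝ) := by positivity
        have hsm : (s:ℝ) ≤ m := by exact_mod_cast (by nlinarith : s ≤ m)
        generalize (k - p) % s = i at *
        generalize (k - p) / s = r at *
        have ht : |(x - (p + i) * δ)/(s * δ)| ≤ 2 * ((ℓ:ℝ)+1) := by
          rw [abs_div, abs_of_pos (by positivity : 0 < (s:ℝ) * δ), div_le_iff₀ (by positivity)]
          have : 2 * ((ℓ:ℝ)+1) * (s * δ) ≥ m * δ := by nlinarith
          refine le_trans ?_ this
          rw [abs_le]
          constructor <;> nlinarith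
        have := hBd (ℓ+1) le_rfl r hr _ ht
        simp only [w]
        rw [abs_mul, abs_mul, abs_of_pos (by positivity : 0 < 1/(s:ℝ)),
          abs_of_pos (by positivity : 0 < 1/((s:ℝ)*δ))]
        calc _ ≤ 1/(s:ℝ) * (1/((s:ℝ)*δ) * B) := by gcongr
          _ = _ := by field_simp
      · simp; positivity
    refine ⟨B / (s^2 * δ), by positivity, ?_, ?_⟩
    · rw [div_mul_eq_mul_div, div_le_iff₀ (by positivity)]
      have : (m:ℝ)^2 ≤ (2 * ((ℓ:ℝ)+1) * s)^2 := by gcongr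
      calc B * ((m:ℝ)^2 * δ) ≤ B * ((2 * ((ℓ:ℝ)+1) * s)^2 * δ) := by gcongr
        _ = _ := by ring
    · rw [← hcard]
      refine cs_abs _ _ _ (by positivity) ((hmin b hbF).trans ?_)
      rw [← nsmul_eq_mul]
      refine Finset.sum_le_card_nsmul _ _ _ fun k _ => ?_
      rw [← sq_abs]
      gcongr
      exact hbB k
  · refine ⟨B / δ, by positivity, ?_, ?_⟩
    · have : (m:ℝ) ≤ ℓ + 1 := by exact_mod_cast (by omega : m ≤ ℓ + 1)
      have h2 : (m:ℝ)^2 ≤ (ℓ+1)^2 := by gcongr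
      have : B / δ * (m^2 * δ) = B * m^2 := by field_simp
      rw [this]; nlinarith
    · rw [← hcard, ← nsmul_eq_mul]
      refine Finset.sum_le_card_nsmul _ _ _ fun k hk => ?_
      rw [hM, Finset.mem_Ico] at hk
      obtain ⟨r, rfl⟩ := Nat.exists_eq_add_of_le hk.1
      have hr : r < m := by omega
      have hinj : Set.InjOn (fun i : ℕ => (i:ℝ)) (Finset.range m : Set ℕ) :=
        fun a _ b _ h => by simpa using h
      let Lr := Lagrange.basis (Finset.range m) (fun i : ℕ => (i:ℝ)) r
      let P := Lr.comp (Polynomial.C (1/δ) * Polynomial.X + Polynomial.C (-(p:ℝ)))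
      have hP : P.natDegree ≤ ℓ := by
        refine (Polynomial.natDegree_comp_le).trans ?_
        have h1 : (Polynomial.C (1/δ) * Polynomial.X + Polynomial.C (-(p:ℝ))).natDegree ≤ 1 :=
          Polynomial.natDegree_add_le_of_degree_le ((Polynomial.natDegree_C_mul_le _ _).trans Polynomial.natDegree_X_le)
            (by rw [Polynomial.natDegree_C]; omega)
        have h2 : Lr.natDegree = m - 1 := by
          simpa using Lagrange.natDegree_basis hinj (Finset.mem_range.2 hr)
        rw [h2]
        exact (Nat.mul_le_mul_left _ h1).trans (by omega)
      have hPe : ∀ u : ℕ, P.eval (((p + u : ℕ):ℝ) * δ) = Lr.eval (u:ℝ) := by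
        intro u
        simp only [P, Polynomial.eval_comp, Polynomial.eval_add, Polynomial.eval_mul,
          Polynomial.eval_C, Polynomial.eval_X]
        congr 1
        push_cast; field_simp; ring
      have hfe := feas_poly ℓ n T δ h x a hF P hP
      rw [hM, Finset.sum_Ico_eq_sum_range, Nat.add_sub_cancel_left,
        Finset.sum_eq_single_of_mem r (Finset.mem_range.2 hr)] at hfe
      · rw [hPe, Lagrange.eval_basis_self hinj (Finset.mem_range.2 hr), mul_one] at hfe
        rw [hfe]
        have : P.derivative.eval x = 1/δ * Lr.derivative.eval ((x - p * δ)/δ) := by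
          simp only [P, Polynomial.derivative_comp]
          simp only [Polynomial.eval_comp, Polynomial.eval_add, Polynomial.eval_mul,
            Polynomial.eval_C, Polynomial.eval_X, Polynomial.derivative_add,
            Polynomial.derivative_C_mul, Polynomial.derivative_C, Polynomial.derivative_X]
          have : (x - p * δ)/δ = 1/δ * x + -(p:ℝ) := by field_simp; ring
          rw [this]; simp
        rw [this, abs_mul, abs_of_pos (by positivity : 0 < 1/δ), div_eq_mul_one_div B, mul_comm B]
        refine mul_le_mul_of_nonneg_left ?_ (by positivity)
        refine hBd m (by omega) r hr _ ?_
        have hmℓ : (m:ℝ) ≤ ℓ := by exact_mod_cast hlm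
        rw [abs_div, abs_of_pos hδ, div_le_iff₀ hδ]
        have : 2 * ((ℓ:ℝ)+1) * δ ≥ m * δ := by gcongr; linarith
        refine le_trans ?_ this
        rw [abs_le]
        constructor <;> nlinarith
      · intro u hu hur
        rw [hPe]
        have := Lagrange.eval_basis_of_ne (v := fun i : ℕ => (i:ℝ)) (Ne.symm hur) hu
        simp only [Lr, this, mul_zero]

/-- bias bound for the local polynomial estimator of `R′(x₀)`. -/
theorem stmt7 (ℓ : ℕ) (hℓ : 1 ≤ ℓ) :
    ∃ C₂ : ℝ, 0 < C₂ ∧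
      ∀ (β L lam μ δ T x₀ h d : ℝ) (n : ℕ) (G : ℝ → ℝ) (a : ℕ → ℝ),
        0 < β → flr β + 1 ≤ ℓ → 0 < L → 0 < lam → 0 < μ → 0 < δ → 1 ≤ n → T = n * δ →
        0 ≤ x₀ → x₀ ≤ T - δ → 0 < d →
        Monotone G → G 0 = 0 → (∀ x, 0 ≤ G x ∧ G x ≤ 1) →
        IntegrableOn (fun x => 1 - G x) (Set.Ioi 0) →
        μ⁻¹ = (∫ x in Set.Ioi (0 : ℝ), (1 - G x)) →
        HolderClass β L (Set.Icc (x₀ - d) (x₀ + d)) G →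
        ((ℓ : ℝ) + 2) * δ / 2 ≤ h →
        Dseg T δ h x₀ ⊆ Set.Icc (x₀ - d) (x₀ + d) →
        Feasible ℓ n T δ h x₀ a →
        (∀ b : ℕ → ℝ, Feasible ℓ n T δ h x₀ b →
          (∑ k ∈ Mset n T δ h x₀, a k ^ 2) ≤ ∑ k ∈ Mset n T δ h x₀, b k ^ 2) →
        |(∑ k ∈ Mset n T δ h x₀, a k * Rcov G lam μ ((k : ℝ) * δ)) -
            deriv (Rcov G lam μ) x₀| ≤ C₂ * lam * L * h ^ β := by
  obtain ⟨C, hC, hCb⟩ := l1_bound ℓ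
  refine ⟨C * 4 ^ ℓ, by positivity, ?_⟩
  intro β L lam μ δ T x₀ h d n G a hβ hβℓ hL hlam hμ hδ hn hT hx0 hxT hd hmono hG0 hG01 hInt hμi hH
    hh hD hF hmin
  have hhpos : 0 < h := lt_of_lt_of_le (by positivity) hh
  have hne : (Mset n T δ h x₀).Nonempty := by
    rw [Finset.nonempty_iff_ne_empty]
    intro he
    have := hF.2 1 (Finset.mem_Icc.2 ⟨le_rfl, hℓ⟩)
    rw [he] at this
    simp at this
  obtain ⟨p, m, hm, hM, hx1, hx2, hmh⟩ := Mset_eq n T δ h x₀ hδ hT hhpos hx0 hxT hne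
  have hm' : (1:ℝ) ≤ m := by exact_mod_cast hm
  have hl1 := hCb n p m T δ h x₀ a hδ hm hM hx1 hx2 hF hmin
  obtain ⟨P, hP1, hP2, hP3⟩ := bias_poly β L lam μ x₀ d G hβ hL hlam hd hmono hInt hH
  have hβℓ' : β ≤ ℓ := by
    have := (flr_spec β hβ).2
    have h2 : (flr β : ℝ) + 1 ≤ ℓ := by exact_mod_cast hβℓ
    linarith
  rw [← hP2, ← feas_poly ℓ n T δ h x₀ a hF P (hP1.trans hβℓ), ← Finset.sum_sub_distrib]
  have hterm : ∀ k ∈ Mset n T δ h x₀, |a k * Rcov G lam μ ((k:ℝ) * δ) - a k * P.eval ((k:ℝ) * δ)|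
      ≤ |a k| * (lam * L * (m * δ) ^ (β + 1)) := by
    intro k hk
    have hkD : (k:ℝ) * δ ∈ Dseg T δ h x₀ := by
      unfold Mset at hk
      exact (Finset.mem_filter.1 hk).2
    rw [← mul_sub, abs_mul]
    refine mul_le_mul_of_nonneg_left ((hP3 _ (hD hkD)).trans ?_) (abs_nonneg _)
    rw [hM, Finset.mem_Ico] at hk
    have k1 : (p:ℝ) ≤ k := by exact_mod_cast hk.1
    have k2 : (k:ℝ) + 1 ≤ p + m := by exact_mod_cast hk.2
    have : |(k:ℝ) * δ - x₀| ≤ m * δ := by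
      rw [abs_le]
      constructor <;> nlinarith
    gcongr
  have hmδ : (m:ℝ) * δ ≤ 4 * h := by
    have : (ℓ:ℝ) * δ ≥ 0 := by positivity
    nlinarith
  calc _ ≤ ∑ k ∈ Mset n T δ h x₀, |a k| * (lam * L * (m * δ) ^ (β + 1)) :=
        (Finset.abs_sum_le_sum_abs _ _).trans (Finset.sum_le_sum hterm)
    _ = (∑ k ∈ Mset n T δ h x₀, |a k|) * (lam * L * (m * δ) ^ (β + 1)) := by rw [Finset.sum_mul]
    _ ≤ C / (m * δ) * (lam * L * (m * δ) ^ (β + 1)) := by gcongr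
    _ = C * lam * L * (m * δ) ^ β := by
        rw [Real.rpow_add_one (by positivity)]
        field_simp
    _ ≤ C * lam * L * (4 * h) ^ β := by gcongr
    _ = C * lam * L * (4 ^ β * h ^ β) := by rw [Real.mul_rpow (by norm_num) hhpos.le]
    _ ≤ C * lam * L * (4 ^ (ℓ:ℝ) * h ^ β) := by
        gcongr
        norm_num
    _ = _ := by rw [Real.rpow_natCast]; ring
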